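/- Let A, P > 0 and r > 1/(√(1+P) − 1). Let X be a real random variable with |X| ≤ A almost surely and let Z ~ N(0,1) be independent of X. Then the relative entropy (with natural logarithm) of the law of X + Z with respect to N(0, 1+P) satisfies D( P_{X+Z} ‖ N(0, 1+P) ) ≥ 8 · ( Q(r A) − Q( (r√(1+P) − 1) A ) )². -/

import Mathlib

open MeasureTheory ProbabilityTheory

open scoped Classical in
/-- Kullback–Leibler divergence (natural logarithm), valued in `EReal`:
`D(μ‖ν) = ∫ log(dμ/dν) dμ` if `μ ≪ ν` and the log-likelihood ratio is integrable,
and `+∞` otherwise. -/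
noncomputable def klDiv {α : Type*} [MeasurableSpace α] (μ ν : Measure α) : EReal :=
  if μ ≪ ν ∧ Integrable (llr μ ν) μ then ((∫ x, llr μ ν x ∂μ : ℝ) : EReal) else ⊤

/-- The standard normal tail function `Q(x) = ∫_x^∞ e^{-y²/2}/√(2π) dy`. -/
noncomputable def gaussQ (x : ℝ) : ℝ :=
  ∫ y in Set.Ioi x, Real.exp (-(y ^ 2) / 2) / Real.sqrt (2 * Real.pi)

/-!
Compare the probabilities of the two-sided tail `{y | r √(1 + P) A < |y|}` under the two laws.
Under `N(0, 1 + P)` it is `2 Q(r A)`. Under the law of `X + Z` it forces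
`(r √(1 + P) - 1) A < |Z|`, because `|X| ≤ A`, so it is at most `2 Q((r √(1 + P) - 1) A)`; the
bound on `r` makes this the smaller of the two. Pinsker's inequality for this single event gives
the factor `2 * 2 ^ 2 = 8`. Pinsker's inequality itself is the Gibbs variational bound applied to
`t f`, with the log-moment-generating function of `f` controlled by Hoeffding's lemma, optimised
over `t`.
-/

section Pinsker

variable {α : Type*} [MeasurableSpace α] {μ ν : Measure α} {f : α → ℝ}

lemma integral_le_integral_llr_add_log_integral_exp [IsProbabilityMeasure μ] [SigmaFinite ν]
    (hμν : μ ≪ ν) (h_int : Integrable (llr μ ν) μ) (hfμ : Integrable f μ)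
    (hfν : Integrable (fun x ↦ Real.exp (f x)) ν) :
    ∫ x, f x ∂μ ≤ ∫ x, llr μ ν x ∂μ + Real.log (∫ x, Real.exp (f x) ∂ν) := by
  have : NeZero ν := ⟨fun hν ↦ NeZero.ne μ <| Measure.absolutelyContinuous_zero_iff.1 (hν ▸ hμν)⟩
  have : IsProbabilityMeasure (ν.tilted f) := isProbabilityMeasure_tilted hfν
  have gibbs := InformationTheory.integral_llr_add_sub_measure_univ_nonneg
    (hμν.trans (absolutelyContinuous_tilted hfν)) (integrable_llr_tilted_right hμν hfμ h_int hfν)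
  rw [integral_llr_tilted_right hμν hfμ hfν h_int, probReal_univ, probReal_univ] at gibbs
  linarith

lemma sq_integral_le_of_hasSubgaussianMGF [IsProbabilityMeasure μ] [SigmaFinite ν] {c : NNReal}
    (hμν : μ ≪ ν) (h_int : Integrable (llr μ ν) μ) (hfμ : Integrable f μ)
    (hf : HasSubgaussianMGF f c ν) :
    (∫ x, f x ∂μ) ^ 2 ≤ 2 * c * ∫ x, llr μ ν x ∂μ := by
  have quadratic_nonneg (t : ℝ) :
      0 ≤ (c / 2 : ℝ) * (t * t) + (-∫ x, f x ∂μ) * t + ∫ x, llr μ ν x ∂μ := by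
    have variational := integral_le_integral_llr_add_log_integral_exp hμν h_int
      (hfμ.const_mul t) (hf.integrable_exp_mul t)
    have cgf_bound : Real.log (∫ x, Real.exp (t * f x) ∂ν) ≤ c * t ^ 2 / 2 := hf.cgf_le t
    rw [integral_const_mul] at variational
    linarith
  have discrim_nonpos := discrim_le_zero quadratic_nonneg
  rw [discrim] at discrim_nonpos
  linarith

lemma two_mul_sq_integral_sub_le_of_mem_Icc [IsProbabilityMeasure μ] [IsProbabilityMeasure ν]
    {a b : ℝ} (hμν : μ ≪ ν) (h_int : Integrable (llr μ ν) μ) (hf : AEMeasurable f ν)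
    (hab : ∀ᵐ x ∂ν, f x ∈ Set.Icc a b) :
    2 * (∫ x, f x ∂μ - ∫ x, f x ∂ν) ^ 2 ≤ (b - a) ^ 2 * ∫ x, llr μ ν x ∂μ := by
  have hfμ : Integrable f μ := Integrable.of_mem_Icc a b (hf.mono_ac hμν) (hμν.ae_le hab)
  have hoeffding := hasSubgaussianMGF_of_mem_Icc hf hab
  have bound := sq_integral_le_of_hasSubgaussianMGF hμν h_int
    (hfμ.sub (integrable_const _)) hoeffding
  have variance_proxy : (((‖b - a‖₊ / 2) ^ 2 : NNReal) : ℝ) = (b - a) ^ 2 / 4 := by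
    rw [NNReal.coe_pow, NNReal.coe_div, coe_nnnorm, div_pow, Real.norm_eq_abs, sq_abs]
    norm_num
  rw [integral_sub' hfμ (integrable_const _), integral_const, probReal_univ, one_smul,
    variance_proxy] at bound
  linarith

lemma two_mul_sq_measureReal_sub_le_klDiv [IsProbabilityMeasure μ] [IsProbabilityMeasure ν]
    {s : Set α} (hs : MeasurableSet s) :
    ((2 * (μ.real s - ν.real s) ^ 2 : ℝ) : EReal) ≤ klDiv μ ν := by
  rw [klDiv]
  split_ifs with h
  · have indicator_mem (x : α) : s.indicator (1 : α → ℝ) x ∈ Set.Icc 0 1 :=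
      ⟨Set.indicator_nonneg (fun _ _ ↦ zero_le_one) x,
        Set.indicator_le_self' (fun _ _ ↦ zero_le_one) x⟩
    have bound := two_mul_sq_integral_sub_le_of_mem_Icc h.1 h.2
      (measurable_one.indicator hs).aemeasurable (ae_of_all ν indicator_mem)
    rw [integral_indicator_one hs, integral_indicator_one hs, sub_zero, one_pow, one_mul] at bound
    exact EReal.coe_le_coe_iff.2 bound
  · exact le_top

end Pinsker

section GaussianTail

lemma gaussianReal_real_Ioi_eq_gaussQ (x : ℝ) : (gaussianReal 0 1).real (Set.Ioi x) = gaussQ x := by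
  have pdf_eq (y : ℝ) :
      gaussianPDFReal 0 1 y = Real.exp (-(y ^ 2) / 2) / Real.sqrt (2 * Real.pi) := by
    rw [gaussianPDFReal, NNReal.coe_one, mul_one, mul_one, sub_zero, inv_mul_eq_div]
  rw [measureReal_def, gaussianReal_apply_eq_integral 0 one_ne_zero, ENNReal.toReal_ofReal
    (integral_nonneg (gaussianPDFReal_nonneg 0 1)), gaussQ]
  simp_rw [pdf_eq]

lemma gaussQ_antitone : Antitone gaussQ := fun x y hxy ↦ by
  rw [← gaussianReal_real_Ioi_eq_gaussQ, ← gaussianReal_real_Ioi_eq_gaussQ]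
  exact measureReal_mono (Set.Ioi_subset_Ioi hxy)

variable (m : ℝ) {v : NNReal}

lemma gaussianReal_real_Ioi (hv : v ≠ 0) (x : ℝ) :
    (gaussianReal m v).real (Set.Ioi x) = gaussQ ((x - m) / √v) := by
  have sqrt_pos : 0 < √(v : ℝ) := Real.sqrt_pos.2 (by positivity)
  have standardize : HasLaw (fun y ↦ (y - m) / √v) (gaussianReal 0 1) (gaussianReal m v) := by
    have h := gaussianReal_div_const (gaussianReal_sub_const
      (HasLaw.id (μ := gaussianReal m v)) m) √v
    have : v / NNReal.mk (√(v : ℝ) ^ 2) (sq_nonneg _) = 1 := by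
      simp only [Real.sq_sqrt v.coe_nonneg]
      exact div_self hv
    rwa [this, sub_self, zero_div] at h
  calc (gaussianReal m v).real (Set.Ioi x)
    _ = (gaussianReal m v).real {y | (y - m) / √v ∈ Set.Ioi ((x - m) / √v)} := by
      simp only [Set.mem_Ioi, div_lt_div_iff_of_pos_right sqrt_pos, sub_lt_sub_iff_right]
      rfl
    _ = (gaussianReal 0 1).real (Set.Ioi ((x - m) / √v)) :=
      standardize.measureReal_eq measurableSet_Ioi
    _ = gaussQ ((x - m) / √v) := gaussianReal_real_Ioi_eq_gaussQ _

lemma gaussianReal_real_Iio (hv : v ≠ 0) (x : ℝ) :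
    (gaussianReal m v).real (Set.Iio x) = gaussQ ((m - x) / √v) := by
  rw [← neg_neg m, ← gaussianReal_map_neg, map_measureReal_apply measurable_neg measurableSet_Iio]
  simp [gaussianReal_real_Ioi _ hv, sub_eq_add_neg, add_comm]

lemma gaussianReal_real_lt_abs_sub (hv : v ≠ 0) {t : ℝ} (ht : 0 ≤ t) :
    (gaussianReal m v).real {y | t < |y - m|} = 2 * gaussQ (t / √v) := by
  have tails : {y : ℝ | t < |y - m|} = Set.Ioi (m + t) ∪ Set.Iio (m - t) := by
    ext y
    simp only [Set.mem_ofPred_eq, lt_abs, neg_sub, Set.mem_union, Set.mem_Ioi, Set.mem_Iio,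
      lt_sub_iff_add_lt', lt_sub_comm (a := t), add_comm t m]
  have tails_disjoint : Disjoint (Set.Ioi (m + t)) (Set.Iio (m - t)) :=
    Set.disjoint_left.2 fun y (hy : m + t < y) (hy' : y < m - t) ↦ by linarith
  rw [tails, measureReal_union tails_disjoint measurableSet_Iio, gaussianReal_real_Ioi m hv,
    gaussianReal_real_Iio m hv, add_sub_cancel_left, sub_sub_cancel, two_mul]

end GaussianTail

section BoundedInput

variable {Ω : Type*} [MeasurableSpace Ω] {μ : Measure Ω}

lemma measureReal_lt_norm_add_le {E : Type*} [SeminormedAddGroup E] [IsFiniteMeasure μ]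
    {X Z : Ω → E} {A : ℝ} (hXA : ∀ᵐ ω ∂μ, ‖X ω‖ ≤ A) (t : ℝ) :
    μ.real {ω | t < ‖X ω + Z ω‖} ≤ μ.real {ω | t - A < ‖Z ω‖} := by
  refine ENNReal.toReal_mono (measure_ne_top μ _) (measure_mono_ae ?_)
  filter_upwards [hXA] with ω hω (hsum : t < ‖X ω + Z ω‖)
  have triangle := norm_add_le (X ω) (Z ω)
  change t - A < ‖Z ω‖
  linarith

variable {X Z : Ω → ℝ} {A t : ℝ} {v w : NNReal}

lemma map_add_gaussian_real_lt_abs_le (hv : v ≠ 0) (hX : AEMeasurable X μ)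
    (hZ : HasLaw Z (gaussianReal 0 v) μ) (hXA : ∀ᵐ ω ∂μ, |X ω| ≤ A) (ht : A ≤ t) :
    (μ.map (fun ω ↦ X ω + Z ω)).real {y | t < |y|} ≤ 2 * gaussQ ((t - A) / √v) := by
  have : IsProbabilityMeasure μ := hZ.isProbabilityMeasure
  calc (μ.map (fun ω ↦ X ω + Z ω)).real {y | t < |y|}
    _ = μ.real {ω | t < |X ω + Z ω|} :=
      map_measureReal_apply_of_aemeasurable (hX.add hZ.aemeasurable)
        (measurableSet_lt measurable_const measurable_id.abs)
    _ ≤ μ.real {ω | t - A < |Z ω|} := measureReal_lt_norm_add_le (X := X) (Z := Z) hXA t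
    _ = (gaussianReal 0 v).real {z | t - A < |z|} :=
      hZ.measureReal_eq (measurableSet_lt measurable_const measurable_id.abs)
    _ = (gaussianReal 0 v).real {z | t - A < |z - 0|} := by simp only [sub_zero]
    _ = 2 * gaussQ ((t - A) / √v) := gaussianReal_real_lt_abs_sub 0 hv (sub_nonneg.2 ht)

lemma eight_mul_sq_gaussQ_sub_le_klDiv_map_add (hv : v ≠ 0) (hw : w ≠ 0) (hX : AEMeasurable X μ)
    (hZ : HasLaw Z (gaussianReal 0 v) μ) (hXA : ∀ᵐ ω ∂μ, |X ω| ≤ A) (ht : 0 ≤ t)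
    (htA : t / √w ≤ (t - A) / √v) :
    ((8 * (gaussQ (t / √w) - gaussQ ((t - A) / √v)) ^ 2 : ℝ) : EReal) ≤
      klDiv (μ.map (fun ω ↦ X ω + Z ω)) (gaussianReal 0 w) := by
  have : IsProbabilityMeasure μ := hZ.isProbabilityMeasure
  have : IsProbabilityMeasure (μ.map (fun ω ↦ X ω + Z ω)) :=
    Measure.isProbabilityMeasure_map (hX.add hZ.aemeasurable)
  have sqrt_pos : 0 < √(v : ℝ) := Real.sqrt_pos.2 (by positivity)
  have hAt : A ≤ t := by
    have : 0 ≤ (t - A) / √v := le_trans (by positivity) htA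
    rwa [le_div_iff₀ sqrt_pos, zero_mul, sub_nonneg] at this
  have output_tail := map_add_gaussian_real_lt_abs_le hv hX hZ hXA hAt
  have gaussian_tail : (gaussianReal 0 w).real {y | t < |y|} = 2 * gaussQ (t / √w) := by
    simpa only [sub_zero] using gaussianReal_real_lt_abs_sub 0 hw ht
  refine le_trans (EReal.coe_le_coe_iff.2 ?_) (two_mul_sq_measureReal_sub_le_klDiv
    (measurableSet_lt measurable_const measurable_id.abs : MeasurableSet {y : ℝ | t < |y|}))
  rw [gaussian_tail]
  set d := gaussQ (t / √w) - gaussQ ((t - A) / √v)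
  have tail_gap : 2 * d ≤
      2 * gaussQ (t / √w) - (μ.map (fun ω ↦ X ω + Z ω)).real {y | t < |y|} := by linarith
  have d_nonneg : 0 ≤ d := sub_nonneg.2 (gaussQ_antitone htA)
  calc 8 * d ^ 2 = 2 * (2 * d) ^ 2 := by ring
    _ ≤ 2 * (2 * gaussQ (t / √w) - (μ.map (fun ω ↦ X ω + Z ω)).real {y | t < |y|}) ^ 2 := by
      gcongr
    _ = _ := by rw [sub_sq_comm]

theorem output_kl_lower_bound_general {P r : ℝ} (hP : 0 < P) (hr : 1 / (√(1 + P) - 1) ≤ r)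
    (hX : AEMeasurable X μ) (hZ : HasLaw Z (gaussianReal 0 1) μ) (hXA : ∀ᵐ ω ∂μ, |X ω| ≤ A) :
    ((8 * (gaussQ (r * A) - gaussQ ((r * √(1 + P) - 1) * A)) ^ 2 : ℝ) : EReal) ≤
      klDiv (μ.map (fun ω ↦ X ω + Z ω)) (gaussianReal 0 (1 + P).toNNReal) := by
  have : IsProbabilityMeasure μ := hZ.isProbabilityMeasure
  have hA : 0 ≤ A := hXA.exists.elim fun ω hω ↦ (abs_nonneg (X ω)).trans hω
  have one_lt_sqrt : 1 < √(1 + P) := Real.lt_sqrt_of_sq_lt (by linarith)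
  have hr_pos : 0 < r := (one_div_pos.2 (sub_pos.2 one_lt_sqrt)).trans_le hr
  have hr_mul : 1 ≤ r * (√(1 + P) - 1) := (div_le_iff₀ (sub_pos.2 one_lt_sqrt)).1 hr
  have output_threshold : r * √(1 + P) * A / √((1 + P).toNNReal : ℝ) = r * A := by
    rw [Real.coe_toNNReal _ (by linarith), mul_right_comm, mul_div_cancel_right₀ _ (by linarith)]
  have noise_threshold : (r * √(1 + P) * A - A) / √((1 : NNReal) : ℝ) =
      (r * √(1 + P) - 1) * A := by
    rw [NNReal.coe_one, Real.sqrt_one, div_one, sub_one_mul]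
  rw [← output_threshold, ← noise_threshold]
  refine eight_mul_sq_gaussQ_sub_le_klDiv_map_add one_ne_zero
    (Real.toNNReal_pos.2 (by linarith)).ne' hX hZ hXA (by positivity) ?_
  rw [output_threshold, noise_threshold]
  gcongr
  linarith

end BoundedInput

/-- Let `A, P > 0` and `r > 1/(√(1+P)-1)`, let `X` be a real random variable
with `|X| ≤ A` a.s. and `Z ~ N(0,1)` independent of `X`. Then
`D(P_{X+Z} ‖ N(0,1+P)) ≥ 8 (Q(rA) - Q((r√(1+P)-1)A))²`. -/
theorem output_kl_lower_bound
    {Ω : Type*} [MeasureSpace Ω] [IsProbabilityMeasure (ℙ : Measure Ω)]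
    (A P r : ℝ) (hA : 0 < A) (hP : 0 < P)
    (hr : 1 / (Real.sqrt (1 + P) - 1) < r)
    (X Z : Ω → ℝ) (hX : Measurable X) (hZ : Measurable Z)
    (hindep : IndepFun X Z ℙ)
    (hZlaw : Measure.map Z ℙ = gaussianReal 0 1)
    (hXA : ∀ᵐ ω ∂ℙ, |X ω| ≤ A) :
    ((8 * (gaussQ (r * A) - gaussQ ((r * Real.sqrt (1 + P) - 1) * A)) ^ 2 : ℝ) : EReal) ≤
      klDiv (Measure.map (fun ω => X ω + Z ω) ℙ) (gaussianReal 0 (1 + P).toNNReal) := by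
  exact output_kl_lower_bound_general hP hr.le hX.aemeasurable ⟨hZ.aemeasurable, hZlaw⟩ hXA
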